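/- Pathwise estimate for the stochastic exponential: let x ∈ ℝ, c ≥ 0, and let (d_i)_{i∈ℕ} be a sequence of real numbers with |d_i| ≤ 1/16 for every i and Σ_{i} d_i² < ∞. Then the infinite product Π_i (1 + d_i)·e^{−d_i} converges to a limit in (0, 1], and setting E := e^{x − c/2} · Π_i (1 + d_i)·e^{−d_i} and Q := c + Σ_i d_i², one has |1 − E| ≤ (|x| + Q) · exp(|x| + Q). -/

import Mathlib

/-- Pathwise estimate for the Doléans-Dade stochastic exponential
`ℰ = exp(x - c/2) · ∏ᵢ (1 + dᵢ) e^{-dᵢ}`: if `c ≥ 0`, `|dᵢ| ≤ 1/16` for all `i` and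
`∑ dᵢ² < ∞`, then the infinite product converges to a limit in `(0, 1]` and, with
`Q = c + ∑ dᵢ²`, one has `|1 - ℰ| ≤ (|x| + Q) · exp (|x| + Q)`. -/
theorem stochastic_exponential_estimate (x c : ℝ) (hc : 0 ≤ c) (d : ℕ → ℝ)
    (hd : ∀ i, |d i| ≤ 1 / 16) (hds : Summable fun i => d i ^ 2) :
    Multipliable (fun i => (1 + d i) * Real.exp (-d i)) ∧
      0 < (∏' i, (1 + d i) * Real.exp (-d i)) ∧
      (∏' i, (1 + d i) * Real.exp (-d i)) ≤ 1 ∧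
      |1 - Real.exp (x - c / 2) * ∏' i, (1 + d i) * Real.exp (-d i)| ≤
        (|x| + (c + ∑' i, d i ^ 2)) * Real.exp (|x| + (c + ∑' i, d i ^ 2)) := by
  have hpos : ∀ i, 0 < 1 + d i := fun i => by
    have := abs_le.mp (hd i)
    linarith [this.1]
  have hfpos : ∀ i, 0 < (1 + d i) * Real.exp (-d i) := fun i =>
    mul_pos (hpos i) (Real.exp_pos _)
  have hlog : ∀ i, Real.log ((1 + d i) * Real.exp (-d i)) = Real.log (1 + d i) - d i := by
    intro i
    rw [Real.log_mul (hpos i).ne' (Real.exp_pos _).ne', Real.log_exp]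
    ring
  have hup : ∀ i, Real.log ((1 + d i) * Real.exp (-d i)) ≤ 0 := by
    intro i
    rw [hlog]
    linarith [Real.log_le_sub_one_of_pos (hpos i)]
  have hlo : ∀ i, -(d i ^ 2) ≤ Real.log ((1 + d i) * Real.exp (-d i)) := by
    intro i
    rw [hlog]
    have h1 : |-d i| < 1 := by
      rw [abs_neg]
      linarith [hd i]
    have h := Real.abs_log_sub_add_sum_range_le h1 2
    have h3 : |-d i| ^ (2 + 1) / (1 - |-d i|) ≤ d i ^ 2 / 15 := by
      rw [abs_neg, div_le_iff₀ (by linarith [hd i]), ← sq_abs (d i)]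
      have := hd i
      have h0 := abs_nonneg (d i)
      nlinarith [mul_nonneg (sq_nonneg |d i|) (sub_nonneg.mpr this)]
    have h4 := (abs_le.mp (h.trans h3)).1
    norm_num [Finset.sum_range_succ] at h4
    nlinarith [sq_nonneg (d i)]
  have hsum : Summable fun i => Real.log ((1 + d i) * Real.exp (-d i)) := by
    refine Summable.of_norm_bounded hds fun i => ?_
    rw [Real.norm_eq_abs, abs_le]
    exact ⟨hlo i, (hup i).trans (sq_nonneg _)⟩
  have hL0 : (∑' i, Real.log ((1 + d i) * Real.exp (-d i))) ≤ 0 := tsum_nonpos hup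
  have hL1 : -(∑' i, d i ^ 2) ≤ ∑' i, Real.log ((1 + d i) * Real.exp (-d i)) := by
    rw [← tsum_neg]
    exact hds.neg.tsum_le_tsum hlo hsum
  refine ⟨Real.multipliable_of_summable_log hfpos hsum, ?_⟩
  rw [← Real.rexp_tsum_eq_tprod hfpos hsum]
  generalize (∑' i, Real.log ((1 + d i) * Real.exp (-d i))) = L at hL0 hL1
  generalize (∑' i, d i ^ 2) = S at hL1
  refine ⟨Real.exp_pos _, Real.exp_le_one_iff.mpr hL0, ?_⟩
  rw [← Real.exp_add]
  have hA1 : -(|x| + (c + S)) ≤ x - c / 2 + L := by linarith [neg_abs_le x]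
  have hA2 : x - c / 2 + L ≤ |x| + (c + S) := by linarith [le_abs_self x]
  have hA0 : 0 ≤ |x| + (c + S) := by linarith [abs_nonneg x]
  generalize |x| + (c + S) = A at *
  generalize x - c / 2 + L = y at *
  have e1 : 1 ≤ Real.exp A := Real.one_le_exp hA0
  have e2 := Real.exp_le_exp.mpr hA2
  have e3 := Real.add_one_le_exp y
  have e4 : (1 - A) * Real.exp A ≤ 1 := by
    have := mul_le_mul_of_nonneg_right (Real.add_one_le_exp (-A)) (Real.exp_pos A).le
    rw [← Real.exp_add, neg_add_cancel, Real.exp_zero] at this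
    linarith
  rw [abs_le]
  constructor
  · linarith
  · nlinarith [mul_nonneg hA0 (sub_nonneg.mpr e1)]
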